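/- arXiv:2302.13827 — 3 statements merged into one kernel-verified Lean document; each statement's English description precedes it below -/
import Mathlib

section
/- Let n be a positive natural number, x₀ ∈ ℝⁿ, Δ ∈ ℝⁿ, and define the lattice grid x : ℤⁿ → ℝⁿ by x(i) = x₀ + (Δ₁ i₁, …, Δₙ iₙ). Let F : ℝⁿ → ℝⁿ be linear, p_W : ℝⁿ → ℝ a function, δ ∈ ℝ, and T(j, i) = p_W(F(x(j)) − F(x(i))) · δ. Then for every fixed index m ∈ ℤⁿ and all j, i ∈ ℤⁿ, one has T(j, i) = T(m, m + i − j); that is, every entry of the transition matrix is determined by the single row indexed by m. -/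
/-!
The displacement between two transported grid points depends only on the difference of their
indices, because the grid is a translate of the image of an additive map and the dynamics is
additive. Hence the transition matrix is circulant over the index group, and each of its rows
is a translate of every other.
-/

section Transition

variable {I V W S : Type*} [AddCommGroup V] [AddGroup W]

theorem circulant_apply_eq_shift [AddCommGroup I] (v : I → S) (m j i : I) :
    Matrix.circulant v j i = Matrix.circulant v m (m + i - j) := by
  have same_difference : j - i = m - (m + i - j) := by abel
  rw [Matrix.circulant_apply, Matrix.circulant_apply, same_difference]

theorem map_translate_sub_map_translate [AddGroup I] (F : V →+ W) (x₀ : V)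
    (L : I →+ V) (j i : I) :
    F (x₀ + L j) - F (x₀ + L i) = F (L (j - i)) := by
  rw [← map_sub, add_sub_add_left_eq_sub, ← map_sub]

theorem transition_eq_circulant [AddGroup I] (x₀ : V) (L : I →+ V) (F : V →+ W)
    (f : W → S) :
    Matrix.of (fun j i ↦ f (F (x₀ + L j) - F (x₀ + L i))) =
      Matrix.circulant fun k ↦ f (F (L k)) := by
  ext j i
  rw [Matrix.of_apply, Matrix.circulant_apply, map_translate_sub_map_translate]

theorem stmt_2_general [AddCommGroup I] (x₀ : V) (L : I →+ V) (x : I → V)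
    (hx : ∀ i, x i = x₀ + L i) (F : V →+ W) (f : W → S) (T : Matrix I I S)
    (hT : ∀ j i, T j i = f (F (x j) - F (x i))) (m j i : I) :
    T j i = T m (m + i - j) := by
  have T_eq_circulant : T = Matrix.circulant fun k ↦ f (F (L k)) := by
    rw [← transition_eq_circulant x₀]
    ext j i
    rw [hT, hx, hx, Matrix.of_apply]
  rw [T_eq_circulant]
  exact circulant_apply_eq_shift _ m j i

end Transition

/-- The lattice with spacing `Δ` and base point `0`, as the additive map sending an integer
multi-index `i` to the vector with coordinates `Δ d * i d`. -/
def latticeHom {ι R : Type*} [NonAssocRing R] (Δ : ι → R) : (ι → ℤ) →+ (ι → R) :=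
  (AddMonoidHom.mulLeft Δ).comp ((Int.castAddHom R).compLeft ι)

/-- Every entry of the transition matrix is determined by a single row:
with the predictive grid transported through the linear dynamics,
T(j,i) = T(m, m + i - j) for any fixed row index m. -/
theorem stmt_2 (n : ℕ) (hn : 0 < n) (x₀ Δ : Fin n → ℝ)
    (x : (Fin n → ℤ) → Fin n → ℝ)
    (hx : ∀ i, x i = fun d => x₀ d + Δ d * (i d : ℝ))
    (F : (Fin n → ℝ) →ₗ[ℝ] (Fin n → ℝ))
    (pW : (Fin n → ℝ) → ℝ) (δ : ℝ)
    (T : (Fin n → ℤ) → (Fin n → ℤ) → ℝ)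
    (hT : ∀ j i, T j i = pW (F (x j) - F (x i)) * δ) :
    ∀ (m j i : Fin n → ℤ), T j i = T m (m + i - j) :=
  stmt_2_general x₀ (latticeHom Δ) x hx F.toAddMonoidHom (fun w ↦ pW w * δ) T hT
end

section
/- Let N be a positive natural number and let R be the N×N real matrix with entries R(j, k) = sin(j k π / (N + 1)) for 1 ≤ j, k ≤ N. Then R · R = ((N + 1)/2) · I, where I is the N×N identity matrix; consequently R is invertible with R⁻¹ = (2/(N + 1)) · R. -/
open Real

/-!
The product-to-sum formula turns the `(j, k)` entry of `R * R` into half the difference of the sums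
of `cos (m * π / n * i)` over `i < n` with `m = j - k` and `m = j + k`, where `n = N + 1`; the term
`i = 0` is harmless because `sin 0 = 0`. When `2 * n` does not divide `m`, the closed form of the
cosine sum collapses to `(1 - cos (m * π)) / 2`, which depends only on the parity of `m`. As `j - k`
and `j + k` have the same parity, the two sums cancel off the diagonal; on the diagonal the first
one is `n` and the second one vanishes.
-/

lemma two_mul_sum_sin_mul_sin (n : ℕ) (j k : ℤ) :
    2 * ∑ i ∈ Finset.range n, sin (j * i * π / n) * sin (i * k * π / n) =
      ∑ i ∈ Finset.range n, cos ((j - k : ℤ) * π / n * i) -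
        ∑ i ∈ Finset.range n, cos ((j + k : ℤ) * π / n * i) := by
  rw [Finset.mul_sum, ← Finset.sum_sub_distrib]
  refine Finset.sum_congr rfl fun i _ => ?_
  rw [← mul_assoc, two_mul_sin_mul_sin]
  push_cast
  ring_nf

section

variable {n : ℕ} [NeZero n]

lemma sum_cos_int_mul_pi_div {m : ℤ} (hm : ¬ (2 * n : ℤ) ∣ m) :
    ∑ i ∈ Finset.range n, cos (m * π / n * i) = (1 - cos (m * π)) / 2 := by
  have hn : (n : ℝ) ≠ 0 := NeZero.ne _
  set a : ℝ := m * π / n with ha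
  have hna : n * a = m * π := by rw [ha]; field_simp
  have not_period (l : ℤ) : a ≠ l * (2 * π) := by
    intro h
    have hml : (m : ℝ) = 2 * n * l :=
      mul_right_cancel₀ pi_ne_zero (by linear_combination n * h - hna)
    exact hm ⟨l, mod_cast hml⟩
  have sin_half_ne : sin (a / 2) ≠ 0 := by
    rw [sin_ne_zero_iff]
    exact fun l hl => not_period l (by linear_combination -2 * hl)
  have closed_form : ∑ i ∈ Finset.range n, cos (a * i) =
      sin (n * a / 2) * cos ((n - 1) * a / 2) / sin (a / 2) := by
    simpa only [add_zero] using sum_cos n not_period 0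
  have numerator : 2 * sin (n * a / 2) * cos ((n - 1) * a / 2) =
      (1 - cos (m * π)) * sin (a / 2) := by
    rw [two_mul_sin_mul_cos, show n * a / 2 - (n - 1) * a / 2 = a / 2 by ring,
      show n * a / 2 + (n - 1) * a / 2 = m * π - a / 2 by linear_combination hna,
      sin_sub, sin_int_mul_pi]
    ring
  rw [closed_form, div_eq_iff sin_half_ne]
  linear_combination numerator / 2

lemma sum_sin_mul_sin_eq_zero {j k : ℤ} (hsub : ¬ (2 * n : ℤ) ∣ j - k)
    (hadd : ¬ (2 * n : ℤ) ∣ j + k) :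
    ∑ i ∈ Finset.range n, sin (j * i * π / n) * sin (i * k * π / n) = 0 := by
  have same_parity : cos ((j + k : ℤ) * π) = cos ((j - k : ℤ) * π) := by
    rw [← cos_add_int_mul_two_pi ((j - k : ℤ) * π) k]
    push_cast
    ring_nf
  have product_to_sum := two_mul_sum_sin_mul_sin n j k
  rw [sum_cos_int_mul_pi_div hsub, sum_cos_int_mul_pi_div hadd, same_parity, sub_self]
    at product_to_sum
  linarith

lemma sum_sin_mul_sin_self {k : ℤ} (hk : ¬ (n : ℤ) ∣ k) :
    ∑ i ∈ Finset.range n, sin (k * i * π / n) * sin (i * k * π / n) = n / 2 := by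
  have hadd : ¬ (2 * n : ℤ) ∣ k + k := by
    rwa [← two_mul, mul_dvd_mul_iff_left two_ne_zero]
  have cos_eq_one : cos ((k + k : ℤ) * π) = 1 := by
    rw [← cos_int_mul_two_pi k]
    push_cast
    ring_nf
  have product_to_sum := two_mul_sum_sin_mul_sin n k k
  rw [sum_cos_int_mul_pi_div hadd, cos_eq_one] at product_to_sum
  simp only [sub_self, Int.cast_zero, zero_mul, zero_div, cos_zero, Finset.sum_const,
    Finset.card_range, nsmul_eq_mul, mul_one, sub_zero] at product_to_sum
  linarith

end

lemma sum_fin_sin_mul_sin (N : ℕ) (j k : Fin N) :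
    ∑ i : Fin N, sin (((j : ℕ) + 1) * ((i : ℕ) + 1) * π / (N + 1)) *
        sin (((i : ℕ) + 1) * ((k : ℕ) + 1) * π / (N + 1)) =
      if j = k then ((N : ℝ) + 1) / 2 else 0 := by
  have include_zero :
      ∑ i : Fin N, sin (((j : ℕ) + 1) * ((i : ℕ) + 1) * π / (N + 1)) *
          sin (((i : ℕ) + 1) * ((k : ℕ) + 1) * π / (N + 1)) =
        ∑ i ∈ Finset.range (N + 1), sin ((j + 1 : ℤ) * i * π / (N + 1 : ℕ)) *
          sin (i * (k + 1 : ℤ) * π / (N + 1 : ℕ)) := by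
    rw [Finset.sum_range_succ', ← Fin.sum_univ_eq_sum_range
      (fun i => sin ((j + 1 : ℤ) * (i + 1 : ℕ) * π / (N + 1 : ℕ)) *
        sin ((i + 1 : ℕ) * (k + 1 : ℤ) * π / (N + 1 : ℕ)))]
    simp
  have not_dvd {d m : ℤ} (hm : m ≠ 0) (hmd : |m| < d) : ¬ d ∣ m :=
    fun h => hm (Int.eq_zero_of_abs_lt_dvd h hmd)
  have hj := j.is_lt
  have hk := k.is_lt
  rw [include_zero]
  split_ifs with hjk
  · subst hjk
    rw [sum_sin_mul_sin_self (not_dvd (by omega) (by rw [abs_lt]; omega))]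
    push_cast
    rfl
  · have hne : (j : ℕ) ≠ k := Fin.val_ne_of_ne hjk
    exact sum_sin_mul_sin_eq_zero (not_dvd (by omega) (by rw [abs_lt]; omega))
      (not_dvd (by omega) (by rw [abs_lt]; omega))

/-- The sine eigenvector matrix R(j,k) = sin(jkπ/(N+1)) satisfies
R·R = ((N+1)/2)·I; hence R is invertible with R⁻¹ = (2/(N+1))·R.
(Indices are 0-based `Fin N`, shifted by one.) -/
theorem stmt_8 (N : ℕ) (hN : 0 < N)
    (R : Matrix (Fin N) (Fin N) ℝ)
    (hR : ∀ j k : Fin N,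
      R j k = Real.sin (((j : ℕ) + 1) * ((k : ℕ) + 1) * π / (N + 1))) :
    R * R = (((N : ℝ) + 1) / 2) • (1 : Matrix (Fin N) (Fin N) ℝ) ∧
      IsUnit R ∧ R⁻¹ = (2 / ((N : ℝ) + 1)) • R := by
  have mul_self : R * R = (((N : ℝ) + 1) / 2) • (1 : Matrix (Fin N) (Fin N) ℝ) := by
    ext j k
    simp only [Matrix.mul_apply, hR, sum_fin_sin_mul_sin, Matrix.smul_apply, Matrix.one_apply,
      smul_eq_mul, mul_ite, mul_one, mul_zero]
  have mul_smul_self : R * ((2 / ((N : ℝ) + 1)) • R) = 1 := by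
    rw [Matrix.mul_smul, mul_self, smul_smul, div_mul_div_cancel₀ (by positivity),
      div_self two_ne_zero, one_smul]
  exact ⟨mul_self, .of_mul_eq_one _ mul_smul_self, Matrix.inv_eq_right_inv mul_smul_self⟩
end

section
/- Let N be a positive natural number, a, b ∈ ℝ, and let S be the N×N symmetric tridiagonal Toeplitz matrix with S(j, k) = a if j = k, b if |j − k| = 1, and 0 otherwise. Let R be the N×N matrix with entries R(j, k) = sin(j k π / (N + 1)), and let Λ be the diagonal matrix with diagonal entries λ_k = a + 2 b cos(k π / (N + 1)). Then for every natural number l, the l-th matrix power satisfies S^l = (2/(N + 1)) · R · Λ^l · R. -/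
open Real Matrix

/-!
For `θ = kπ/(N+1)` the function `m ↦ sin (mθ)` vanishes at `0` and `N+1`, so the Toeplitz stencil
acts on it without boundary corrections, and `sin ((m-1)θ) + sin ((m+1)θ) = 2 cos θ sin (mθ)` makes
it an eigenvector for `a + 2b cos θ`. Hence `S R = R Λ`, so `S ^ l R = R Λ ^ l`. Discrete
orthogonality of the sines, which reduces to the closed form for `∑ cos (mθ)`, gives
`R R = ((N+1)/2) I`, and multiplying on the right by `(2/(N+1)) R` isolates `S ^ l`.
-/

theorem pow_eq_mul_pow_mul_of_semiconjBy {M : Type*} [Monoid M] {p q x y : M}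
    (hxy : SemiconjBy p x y) (hpq : p * q = 1) (l : ℕ) : y ^ l = p * x ^ l * q := by
  rw [(hxy.pow_right l).eq, mul_assoc, hpq, mul_one]

section SineSums

theorem sum_range_sin_mul_sin (n : ℕ) (x y : ℝ) :
    ∑ k ∈ Finset.range n, sin (x * k) * sin (y * k) =
      (∑ k ∈ Finset.range n, cos ((x - y) * k) - ∑ k ∈ Finset.range n, cos ((x + y) * k)) / 2 := by
  rw [← Finset.sum_sub_distrib, Finset.sum_div]
  refine Finset.sum_congr rfl fun k _ => ?_
  rw [sub_mul, add_mul, ← two_mul_sin_mul_sin]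
  ring

variable {n : ℕ}

theorem sum_range_cos_int_mul_pi_div (hn : n ≠ 0) {p : ℤ} (hp : ¬ (2 * n : ℤ) ∣ p) :
    ∑ k ∈ Finset.range n, cos (p * π / n * k) = (1 - (-1) ^ p) / 2 := by
  have hangle : ∀ q : ℤ, (p * π / n : ℝ) ≠ q * (2 * π) := by
    intro q hq
    refine hp ⟨q, ?_⟩
    field_simp at hq
    exact_mod_cast (by linarith : (p : ℝ) = 2 * n * q)
  have hsin : sin (p * π / n / 2) ≠ 0 := by
    rw [Ne, sin_eq_zero_iff]
    rintro ⟨q, hq⟩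
    exact hangle q (by linarith)
  have hclosed := sum_cos n hangle 0
  simp only [add_zero] at hclosed
  have hhalf : (n : ℝ) * (p * π / n) / 2 = p * π / 2 := by field_simp
  have hshift : ((n : ℝ) - 1) * (p * π / n) / 2 = p * π / 2 - p * π / n / 2 := by field_simp
  have hdouble : 2 * sin (p * π / 2) * cos (p * π / 2) = 0 := by
    rw [← sin_two_mul, mul_div_cancel₀ _ two_ne_zero, sin_int_mul_pi]
  have hsq : sin (p * π / 2) ^ 2 = (1 - (-1) ^ p) / 2 := by
    rw [sin_sq_eq_half_sub, mul_div_cancel₀ _ two_ne_zero, cos_int_mul_pi]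
    ring
  rw [hclosed, hhalf, hshift, cos_sub, ← hsq, div_eq_iff hsin]
  linear_combination cos (p * π / n / 2) / 2 * hdouble

theorem sum_range_sin_mul_sin_eq_zero {j m : ℤ} (hsub : ¬ (2 * n : ℤ) ∣ j - m)
    (hadd : ¬ (2 * n : ℤ) ∣ j + m) :
    ∑ k ∈ Finset.range n, sin (j * π / n * k) * sin (m * π / n * k) = 0 := by
  rcases eq_or_ne n 0 with rfl | hn
  · simp
  have hparity : (-1 : ℝ) ^ (j + m) = (-1) ^ (j - m) := by
    rw [show j + m = j - m + 2 * m by ring, zpow_add₀ (by norm_num), (even_two_mul m).neg_one_zpow,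
      mul_one]
  rw [sum_range_sin_mul_sin, ← sub_div, ← sub_mul, ← Int.cast_sub, ← add_div, ← add_mul,
    ← Int.cast_add, sum_range_cos_int_mul_pi_div hn hsub, sum_range_cos_int_mul_pi_div hn hadd,
    hparity, sub_self, zero_div]

theorem sum_range_sin_mul_self {j : ℤ} (hj : ¬ (n : ℤ) ∣ j) :
    ∑ k ∈ Finset.range n, sin (j * π / n * k) * sin (j * π / n * k) = n / 2 := by
  rcases eq_or_ne n 0 with rfl | hn
  · simp
  have hdouble : ¬ (2 * n : ℤ) ∣ j + j := by
    rwa [← two_mul, mul_dvd_mul_iff_left two_ne_zero]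
  rw [sum_range_sin_mul_sin, ← add_div, ← add_mul, ← Int.cast_add,
    sum_range_cos_int_mul_pi_div hn hdouble, (Even.add_self j).neg_one_zpow]
  simp

end SineSums

/-- The `N × N` sine matrix (discrete sine transform of type I), unnormalised; rows and columns
are numbered from `1` in the usual formula `sin (jkπ/(N+1))`, hence the shifts. -/
noncomputable def sineMatrix (N : ℕ) : Matrix (Fin N) (Fin N) ℝ :=
  of fun j k => sin (((j : ℕ) + 1) * ((k : ℕ) + 1) * π / (N + 1))

/-- The symmetric tridiagonal Toeplitz matrix with `a` on the diagonal and `b` on the two adjacent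
diagonals; the distance to the diagonal is taken in `ℤ` to avoid truncated subtraction. -/
def symmTridiagToeplitz {α : Type*} [Zero α] (N : ℕ) (a b : α) : Matrix (Fin N) (Fin N) α :=
  of fun j k => if (j : ℕ) = k then a else if ((j : ℤ) - (k : ℤ)).natAbs = 1 then b else 0

/-- The eigenvalue of `symmTridiagToeplitz N a b` belonging to column `k` of `sineMatrix N`. -/
noncomputable def toeplitzEigenvalue (N : ℕ) (a b : ℝ) (k : Fin N) : ℝ :=
  a + 2 * b * cos (((k : ℕ) + 1) * π / (N + 1))

theorem sineMatrix_mul_self_apply {N : ℕ} (j m : Fin N) :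
    (sineMatrix N * sineMatrix N) j m = ∑ k ∈ Finset.range (N + 1),
      sin (((j + 1 : ℕ) : ℤ) * π / (N + 1 : ℕ) * k) *
        sin (((m + 1 : ℕ) : ℤ) * π / (N + 1 : ℕ) * k) := by
  rw [Finset.sum_range_succ', ← Fin.sum_univ_eq_sum_range (fun k =>
    sin (((j + 1 : ℕ) : ℤ) * π / (N + 1 : ℕ) * (k + 1 : ℕ)) *
      sin (((m + 1 : ℕ) : ℤ) * π / (N + 1 : ℕ) * (k + 1 : ℕ))), mul_apply]
  simp only [Nat.cast_zero, mul_zero, sin_zero, add_zero]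
  refine Finset.sum_congr rfl fun k _ => ?_
  simp only [sineMatrix, of_apply]
  push_cast
  ring_nf

theorem sineMatrix_mul_self (N : ℕ) :
    sineMatrix N * sineMatrix N = (((N : ℝ) + 1) / 2) • (1 : Matrix (Fin N) (Fin N) ℝ) := by
  ext j m
  rw [sineMatrix_mul_self_apply, Matrix.smul_apply, one_apply, smul_eq_mul]
  split_ifs with hjm
  · subst hjm
    rw [sum_range_sin_mul_self fun hdvd => by have := Int.le_of_dvd (by omega) hdvd; omega]
    push_cast
    ring
  · rw [mul_zero]
    have hne : (j : ℕ) ≠ m := Fin.val_ne_of_ne hjm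
    refine sum_range_sin_mul_sin_eq_zero (fun hdvd => ?_) (fun hdvd => ?_)
    · have := Int.eq_zero_of_abs_lt_dvd hdvd (by rw [abs_lt]; omega)
      omega
    · have := Int.le_of_dvd (by omega) hdvd
      omega

theorem sineMatrix_mul_smul_sineMatrix (N : ℕ) :
    sineMatrix N * ((2 / ((N : ℝ) + 1)) • sineMatrix N) = 1 := by
  have hN : (N : ℝ) + 1 ≠ 0 := by positivity
  rw [mul_smul_comm, sineMatrix_mul_self, smul_smul, div_mul_div_cancel₀ hN,
    div_self two_ne_zero, one_smul]

-- Padding the vector with zeros at both ends makes the stencil the same in every row.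
theorem symmTridiagToeplitz_mulVec {α : Type*} [NonUnitalNonAssocSemiring α] {N : ℕ} (a b : α)
    {f : ℕ → α} (hleft : f 0 = 0) (hright : f (N + 1) = 0) (j : Fin N) :
    (symmTridiagToeplitz N a b *ᵥ fun k => f (k + 1)) j =
      b * f j + a * f (j + 1) + b * f (j + 2) := by
  let stencil (i : ℕ) : α :=
    (if (j : ℕ) = i then b * f i else 0) + (if (j : ℕ) + 1 = i then a * f i else 0) +
      (if (j : ℕ) + 2 = i then b * f i else 0)
  have hentry : ∀ k : Fin N, symmTridiagToeplitz N a b j k * f (k + 1) = stencil (k + 1) := by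
    intro k
    have hadjacent : ((j : ℤ) - (k : ℤ)).natAbs = 1 ↔ (j : ℕ) = k + 1 ∨ (j : ℕ) + 1 = k := by
      omega
    simp only [symmTridiagToeplitz, of_apply, stencil, hadjacent]
    grind [zero_mul]
  have hfirst : stencil 0 = 0 := by simp [stencil, hleft]
  have hlast : stencil (N + 1) = 0 := by simp [stencil, hright]
  have hpad : ∑ k : Fin N, stencil (k + 1) = ∑ i ∈ Finset.range (N + 2), stencil i := by
    rw [Finset.sum_range_succ, Finset.sum_range_succ', hfirst, hlast, add_zero, add_zero,
      Fin.sum_univ_eq_sum_range (fun k => stencil (k + 1))]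
  calc (symmTridiagToeplitz N a b *ᵥ fun k => f (k + 1)) j
      = ∑ k : Fin N, symmTridiagToeplitz N a b j k * f (k + 1) := rfl
    _ = ∑ k : Fin N, stencil (k + 1) := Finset.sum_congr rfl fun k _ => hentry k
    _ = ∑ i ∈ Finset.range (N + 2), stencil i := hpad
    _ = b * f j + a * f (j + 1) + b * f (j + 2) := by
      have hj : (j : ℕ) < N := j.isLt
      simp only [stencil, Finset.sum_add_distrib, Finset.sum_ite_eq, Finset.mem_range]
      rw [if_pos (by omega), if_pos (by omega), if_pos (by omega)]

theorem symmTridiagToeplitz_mulVec_sineMatrix_col (N : ℕ) (a b : ℝ) (m : Fin N) :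
    symmTridiagToeplitz N a b *ᵥ (sineMatrix N).col m =
      toeplitzEigenvalue N a b m • (sineMatrix N).col m := by
  set θ : ℝ := ((m : ℕ) + 1) * π / (N + 1) with hθ
  have hcol : (sineMatrix N).col m = fun k : Fin N => sin (((k + 1 : ℕ) : ℝ) * θ) := by
    ext k
    simp only [sineMatrix, col_apply, of_apply, hθ]
    push_cast
    ring_nf
  have hright : sin (((N + 1 : ℕ) : ℝ) * θ) = 0 := by
    rw [show ((N + 1 : ℕ) : ℝ) * θ = (m + 1 : ℕ) * π by rw [hθ]; push_cast; field_simp]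
    exact sin_nat_mul_pi _
  ext j
  have hrecurrence : sin ((j : ℕ) * θ) + sin (((j + 2 : ℕ) : ℝ) * θ) =
      2 * cos θ * sin (((j + 1 : ℕ) : ℝ) * θ) := by
    push_cast
    rw [show (j : ℝ) * θ = (j + 1) * θ - θ by ring,
      show ((j : ℝ) + 2) * θ = (j + 1) * θ + θ by ring, sin_sub, sin_add]
    ring
  rw [hcol, symmTridiagToeplitz_mulVec a b (f := fun i => sin ((i : ℝ) * θ)) (by simp) hright]
  simp only [Pi.smul_apply, smul_eq_mul, toeplitzEigenvalue, ← hθ]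
  linear_combination b * hrecurrence

theorem semiconjBy_sineMatrix (N : ℕ) (a b : ℝ) :
    SemiconjBy (sineMatrix N) (diagonal (toeplitzEigenvalue N a b))
      (symmTridiagToeplitz N a b) := by
  ext j m
  rw [mul_diagonal, mul_comm]
  exact (congrFun (symmTridiagToeplitz_mulVec_sineMatrix_col N a b m) j).symm

/-- Spectral power formula for the symmetric tridiagonal Toeplitz matrix:
S^l = (2/(N+1)) · R · Λ^l · R with the sine eigenvector matrix R and the
diagonal eigenvalue matrix Λ.  (Indices are 0-based `Fin N`, shifted by one.) -/
theorem stmt_11 (N : ℕ) (hN : 0 < N) (a b : ℝ)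
    (S : Matrix (Fin N) (Fin N) ℝ)
    (hS : ∀ j k : Fin N, S j k =
      if (j : ℕ) = k then a
      else if ((j : ℤ) - (k : ℤ)).natAbs = 1 then b else 0)
    (R : Matrix (Fin N) (Fin N) ℝ)
    (hR : ∀ j k : Fin N,
      R j k = Real.sin (((j : ℕ) + 1) * ((k : ℕ) + 1) * π / (N + 1)))
    (Λ : Matrix (Fin N) (Fin N) ℝ)
    (hΛ : Λ = Matrix.diagonal
      (fun k : Fin N => a + 2 * b * Real.cos (((k : ℕ) + 1) * π / (N + 1)))) :
    ∀ l : ℕ, S ^ l = (2 / ((N : ℝ) + 1)) • (R * Λ ^ l * R) := by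
  intro l
  obtain rfl : S = symmTridiagToeplitz N a b := Matrix.ext hS
  obtain rfl : R = sineMatrix N := Matrix.ext hR
  obtain rfl : Λ = diagonal (toeplitzEigenvalue N a b) := hΛ
  rw [pow_eq_mul_pow_mul_of_semiconjBy (semiconjBy_sineMatrix N a b)
    (sineMatrix_mul_smul_sineMatrix N), mul_smul_comm]
end
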